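/- Let d ≥ 2, q > 2, T > 0, and λ₀, λ₁, λ₂ ∈ 2^ℤ. Then ‖ |D| K P_{λ₀} 𝓡 · ( u_{λ₁} 𝓡 √K v_{λ₂} ) ‖_{L^1_T L^2_x} ≲ T^{1−1/q} · min(⟨λ₁⟩, ⟨λ₂⟩)^{d/2 − 1/(2q)} · ⟨λ₂⟩^{−1/2} · ‖u‖_{X_{λ₁}} ‖v‖_{X_{λ₂}} for all u ∈ X_{λ₁} and v ∈ X_{λ₂}, where u_{λ} = P_λ u, and the implicit constant is independent of T and the λ's. -/

import Mathlib

noncomputable section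

open MeasureTheory Complex Real
open scoped FourierTransform ENNReal

/-- Euclidean space `ℝ^d`. -/
abbrev Euc (d : ℕ) := EuclideanSpace ℝ (Fin d)

/-- Japanese bracket `⟨x⟩ = (1+|x|²)^{1/2}`. -/
def jap (x : ℝ) : ℝ := Real.sqrt (1 + x ^ 2)

/-- The symbol `m_β(r) = √(r(1+βr²)tanh r)`. -/
def mSymb (β r : ℝ) : ℝ := Real.sqrt (r * (1 + β * r ^ 2) * Real.tanh r)

/-- The constant `c_{β,d}(λ) = λ^{d/2-1}⟨√β λ⟩^{-d/2}⟨λ⟩^{d/4+1}`. -/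
def cFactor (β : ℝ) (d : ℕ) (lam : ℝ) : ℝ :=
  lam ^ ((d : ℝ) / 2 - 1) * jap (Real.sqrt β * lam) ^ (-(d : ℝ) / 2) *
    jap lam ^ ((d : ℝ) / 4 + 1)

/-- `χ ∈ C_0^∞(ℝ)`, `0 ≤ χ ≤ 1`, `χ ≡ 1` on `[-1,1]`, `supp χ ⊆ [-2,2]`. -/
def IsCutoff (χ : ℝ → ℝ) : Prop :=
  ContDiff ℝ (⊤ : ℕ∞) χ ∧ HasCompactSupport χ ∧ (∀ s, 0 ≤ χ s ∧ χ s ≤ 1) ∧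
    (∀ s ∈ Set.Icc (-1 : ℝ) 1, χ s = 1) ∧ Function.support χ ⊆ Set.Icc (-2 : ℝ) 2

/-- `ρ(s) = χ(s) - χ(2s)`. -/
def rho (χ : ℝ → ℝ) (s : ℝ) : ℝ := χ s - χ (2 * s)

/-- Fourier multiplier operator with symbol `m`. -/
def mulOp {d : ℕ} (m : Euc d → ℂ) (f : Euc d → ℂ) : Euc d → ℂ :=
  𝓕⁻ fun ξ => m ξ * 𝓕 f ξ

/-- The Littlewood–Paley type projection `P_λ` with multiplier `ρ(|ξ|/λ)`. -/
def proj {d : ℕ} (χ : ℝ → ℝ) (lam : ℝ) (f : Euc d → ℂ) : Euc d → ℂ :=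
  mulOp (fun ξ => (rho χ (‖ξ‖ / lam) : ℂ)) f

/-- The propagator `S_{m_β}(t) = exp(-it m_β(D))`, so that `S_{m_β}(±t) = prop β (±t)`. -/
def propg (β : ℝ) {d : ℕ} (t : ℝ) (f : Euc d → ℂ) : Euc d → ℂ :=
  mulOp (fun ξ => Complex.exp (-Complex.I * (t * mSymb β ‖ξ‖))) f

/-- The symbol `K(ξ) = tanh|ξ|/|ξ|`. -/
def Ksym {d : ℕ} (ξ : Euc d) : ℝ := Real.tanh ‖ξ‖ / ‖ξ‖

/-- The `j`-th Riesz symbol `ξ_j/|ξ|`. -/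
def rzSym {d : ℕ} (j : Fin d) (ξ : Euc d) : ℝ := ξ j / ‖ξ‖

/-- The dyadic norm `‖u‖_{X_λ} = (‖P_λ u‖²_{L^∞_T L^2_x}
+ ⟨λ⟩^{-3/q} ‖P_λ u‖²_{L^q_T L^r_x})^{1/2}` with `r = 2qd/(qd-4)`. -/
def XlamNorm {d : ℕ} (χ : ℝ → ℝ) (T q lam : ℝ) (u : ℝ → Euc d → ℂ) : ℝ≥0∞ :=
  (essSup (fun t => eLpNorm (proj χ lam (u t)) 2 volume)
      (volume.restrict (Set.Ioc (0 : ℝ) T)) ^ 2 +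
    ENNReal.ofReal (jap lam ^ (-3 / q)) *
      ((∫⁻ t in Set.Ioc (0 : ℝ) T,
          eLpNorm (proj χ lam (u t))
              (ENNReal.ofReal (2 * q * d / (q * d - 4))) volume ^ q) ^ (1 / q)) ^ 2) ^
    ((1 : ℝ) / 2)

/-- The norm `‖u‖_{X^s_T} = (Σ_{λ ∈ 2^ℤ} ⟨λ⟩^{2s} ‖u‖²_{X_λ})^{1/2}`. -/
def XsNorm {d : ℕ} (χ : ℝ → ℝ) (T q s : ℝ) (u : ℝ → Euc d → ℂ) : ℝ≥0∞ :=
  (∑' n : ℤ, ENNReal.ofReal (jap ((2 : ℝ) ^ n) ^ (2 * s)) *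
      XlamNorm χ T q ((2 : ℝ) ^ n) u ^ 2) ^ ((1 : ℝ) / 2)

/-!
The outer symbol `|ξ| K(ξ) ρ(|ξ|/λ₀) ξ_j/|ξ| = tanh|ξ| ρ(|ξ|/λ₀) ξ_j/|ξ|` is bounded by `1`, so by
Plancherel only the product `u_{λ₁} 𝓡√K v_{λ₂}` has to be estimated in `L²`. The factor of lower
frequency is put in `L^∞`, which by Bernstein's inequality costs `λ^{d/2 - 2/q}` times its `L^r`
norm, while the other factor stays in `L²`. Either way the multiplier `ξ_j/|ξ| √K(ξ)` contributes
`⟨λ₂⟩^{-1/2}`, since it is a Mikhlin symbol of that size near frequency `λ₂`. Hölder's inequality in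
time gives `T^{1-1/q}`, and the weight in the norm of `X_λ` gives `⟨λ⟩^{3/(2q)}`, which together
with `λ^{d/2 - 2/q}` is at most `⟨λ⟩^{d/2 - 1/(2q)}`.

Only `C¹` bounds on the symbols enter: if `m` lives at frequency `λ`, its kernel is the product of
`(1 + λ|y|)⁻¹`, which lies in `L^{qd/2}` because `q > 2`, and a function which is in `L²` by
Plancherel applied to `m` and `∇m`. This gives Bernstein's inequality.
-/

section Fourier

variable {E F : Type*} [NormedAddCommGroup E] [InnerProductSpace ℝ E] [FiniteDimensional ℝ E]
  [MeasurableSpace E] [BorelSpace E] [NormedAddCommGroup F]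

section NormedSpace

variable [NormedSpace ℂ F]

theorem fourier_of_not_integrable {f : E → F} (hf : ¬ Integrable f) : 𝓕 f = 0 := by
  ext ξ
  rw [Real.fourier_eq]
  exact integral_undef (by rwa [Real.fourierIntegral_convergent_iff])

-- The Fourier integral of a non-integrable function has the junk value `0`.
theorem continuous_fourier (f : E → F) : Continuous (𝓕 f) := by
  by_cases hf : Integrable f
  · exact VectorFourier.fourierIntegral_continuous Real.continuous_fourierChar
      (innerSL ℝ).continuous₂ hf
  · rw [fourier_of_not_integrable hf]
    exact continuous_zero

theorem continuous_fourierInv (f : E → F) : Continuous (𝓕⁻ f) := by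
  rw [Real.fourierInv_eq_fourier_comp_neg]
  exact continuous_fourier _

theorem eLpNorm_fourierInv_eq (f : E → F) (p : ℝ≥0∞) :
    eLpNorm (𝓕⁻ f) p volume = eLpNorm (𝓕 f) p volume := by
  have h : 𝓕⁻ f = 𝓕 f ∘ Neg.neg := funext fun x => Real.fourierInv_eq_fourier_neg f x
  rw [h, eLpNorm_comp_measurePreserving (continuous_fourier f).aestronglyMeasurable
    (Measure.measurePreserving_neg _)]

end NormedSpace

section Plancherel

variable [InnerProductSpace ℂ F] [CompleteSpace F]

theorem integral_smul_fourier_eq (g : SchwartzMap E ℂ) {f : E → F} (hf : Integrable f) :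
    ∫ x, g x • 𝓕 f x = ∫ x, 𝓕 (g : E → ℂ) x • f x := by
  have h := VectorFourier.integral_fourierIntegral_smul_eq_flip (e := 𝐞) (μ := volume)
    (ν := volume) (L := innerₗ E) Real.continuous_fourierChar continuous_inner g.integrable hf
  rw [flip_innerₗ] at h
  exact h.symm

theorem integral_smul_fourier_Lp_eq (g : SchwartzMap E ℂ) (f : Lp F 2 (volume : Measure E)) :
    ∫ x, g x • (𝓕 f : Lp F 2 (volume : Measure E)) x = ∫ x, 𝓕 (g : E → ℂ) x • f x := by
  have h := congrArg (fun S => S g) (Lp.fourier_toTemperedDistribution_eq f)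
  simp only [TemperedDistribution.fourier_apply, Lp.toTemperedDistribution_apply] at h
  rw [← h, SchwartzMap.fourier_coe]

theorem fourier_toLp_ae_eq {f : E → F} (hf : Integrable f) (hf2 : MemLp f 2 volume) :
    𝓕 f =ᵐ[volume] (𝓕 (hf2.toLp f) : Lp F 2 (volume : Measure E)) := by
  refine ae_eq_of_integral_contDiff_smul_eq (continuous_fourier f).locallyIntegrable
    ((Lp.memLp _).locallyIntegrable (by norm_num)) fun g hg hgs => ?_
  let G : SchwartzMap E ℂ := HasCompactSupport.toSchwartzMap
    (f := fun x => (g x : ℂ)) (hgs.comp_left Complex.ofReal_zero)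
    (Complex.ofRealCLM.contDiff.comp hg)
  have hG : ∀ h : E → F, ∫ x, g x • h x = ∫ x, G x • h x := fun h =>
    integral_congr_ae (.of_forall fun x => (Complex.coe_smul (g x) (h x)).symm)
  rw [hG, hG, integral_smul_fourier_eq G hf, integral_smul_fourier_Lp_eq]
  refine integral_congr_ae ?_
  filter_upwards [hf2.coeFn_toLp] with x hx
  rw [hx]

theorem eLpNorm_fourier_le (f : E → F) : eLpNorm (𝓕 f) 2 volume ≤ eLpNorm f 2 volume := by
  by_cases hf : Integrable f
  · by_cases htop : eLpNorm f 2 volume = ⊤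
    · simp [htop]
    have hf2 : MemLp f 2 volume := ⟨hf.1, lt_top_iff_ne_top.2 htop⟩
    rw [eLpNorm_congr_ae (fourier_toLp_ae_eq hf hf2), ← eLpNorm_congr_ae hf2.coeFn_toLp,
      ← Lp.enorm_def, ← Lp.enorm_def, ← ofReal_norm, ← ofReal_norm, Lp.norm_fourier_eq]
  · simp [fourier_of_not_integrable hf]

theorem eLpNorm_fourierInv_le (f : E → F) :
    eLpNorm (𝓕⁻ f) 2 volume ≤ eLpNorm f 2 volume :=
  (eLpNorm_fourierInv_eq f 2).trans_le (eLpNorm_fourier_le f)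

end Plancherel

end Fourier

section Scaling

open Module

variable {E F : Type*} [NormedAddCommGroup E] [NormedSpace ℝ E] [FiniteDimensional ℝ E]
  [MeasurableSpace E] [BorelSpace E] [NormedAddCommGroup F]

theorem eLpNorm_comp_smul (μ : Measure E) [μ.IsAddHaarMeasure] {f : E → F} (hf : Continuous f)
    (p : ℝ≥0∞) {R : ℝ} (hR : 0 < R) :
    eLpNorm (fun x => f (R • x)) p μ =
      ENNReal.ofReal (R ^ (-(finrank ℝ E : ℝ) / p.toReal)) * eLpNorm f p μ := by
  have hmap := eLpNorm_map_measure (μ := μ) (p := p) (f := fun x => R • x)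
    hf.aestronglyMeasurable (by fun_prop)
  rw [← Function.comp_def, ← hmap, Measure.map_addHaar_smul _ hR.ne',
    eLpNorm_smul_measure_of_ne_zero (by simpa using pow_pos (abs_pos.2 hR.ne') _), smul_eq_mul,
    abs_of_pos (by positivity), ENNReal.ofReal_rpow_of_nonneg (by positivity) (by positivity)]
  congr 2
  rw [← Real.rpow_natCast, ← Real.rpow_neg hR.le, ← Real.rpow_mul hR.le]
  simp [div_eq_mul_inv]

theorem eLpNorm_inv_one_add_norm_ne_top (μ : Measure E) [μ.IsAddHaarMeasure] {p : ℝ}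
    (hp : finrank ℝ E < p) :
    eLpNorm (fun x : E => (1 + ‖x‖)⁻¹) (ENNReal.ofReal p) μ ≠ ⊤ := by
  have hp0 : 0 < p := (Nat.cast_nonneg _).trans_lt hp
  rw [eLpNorm_eq_lintegral_rpow_enorm_toReal (by simpa using hp0) (by simp),
    ENNReal.toReal_ofReal hp0.le]
  refine ENNReal.rpow_ne_top_of_nonneg (by positivity) ?_
  convert! (finite_integral_one_add_norm (E := E) (μ := μ) hp).ne using 3 with x
  rw [Real.enorm_of_nonneg (by positivity), ENNReal.ofReal_rpow_of_nonneg (by positivity) hp0.le,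
    Real.inv_rpow (by positivity), Real.rpow_neg (by positivity)]

theorem addHaar_closedBall_rpow (μ : Measure E) [μ.IsAddHaarMeasure] {R a : ℝ} (hR : 0 ≤ R)
    (ha : 0 ≤ a) :
    μ (Metric.closedBall (0 : E) R) ^ a =
      ENNReal.ofReal (R ^ (finrank ℝ E * a)) * μ (Metric.ball (0 : E) 1) ^ a := by
  rw [Measure.addHaar_closedBall _ _ hR, ENNReal.mul_rpow_of_nonneg _ _ ha,
    ENNReal.ofReal_rpow_of_nonneg (by positivity) ha, ← Real.rpow_natCast, ← Real.rpow_mul hR]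

end Scaling

section AdaptedSymbol

variable {E : Type*} [NormedAddCommGroup E] [NormedSpace ℝ E]

/-- The `C¹` symbols of size `A` adapted to the ball `|ξ| ≤ R`: they vanish outside this ball and
`M` and `R ∇M` are bounded by `A`. -/
structure IsAdaptedSymbol (R A : ℝ) (M : E → ℂ) : Prop where
  contDiff : ContDiff ℝ 1 M
  eq_zero_of_lt_norm : ∀ ξ, R < ‖ξ‖ → M ξ = 0
  norm_le : ∀ ξ, ‖M ξ‖ ≤ A
  mul_norm_fderiv_le : ∀ ξ, R * ‖fderiv ℝ M ξ‖ ≤ A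

namespace IsAdaptedSymbol

variable {R A : ℝ} {M : E → ℂ}

theorem hasCompactSupport [FiniteDimensional ℝ E] (hM : IsAdaptedSymbol R A M) :
    HasCompactSupport M :=
  .intro (isCompact_closedBall 0 R) fun ξ hξ => hM.eq_zero_of_lt_norm ξ (by simpa using hξ)

theorem fderiv_eq_zero_of_lt_norm (hM : IsAdaptedSymbol R A M) {ξ : E} (hξ : R < ‖ξ‖) :
    fderiv ℝ M ξ = 0 := by
  have hev : M =ᶠ[nhds ξ] fun _ => 0 := by
    filter_upwards [(isOpen_lt continuous_const continuous_norm).mem_nhds hξ] with η hη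
    exact hM.eq_zero_of_lt_norm η hη
  simp [hev.fderiv_eq]

end IsAdaptedSymbol

end AdaptedSymbol

theorem norm_le_sum_abs_inner {ι E : Type*} [Fintype ι] [NormedAddCommGroup E]
    [InnerProductSpace ℝ E] (b : OrthonormalBasis ι ℝ E) (x : E) :
    ‖x‖ ≤ ∑ i, |inner ℝ x (b i)| := by
  calc ‖x‖ = ‖∑ i, inner ℝ (b i) x • b i‖ := by rw [b.sum_repr' x]
    _ ≤ ∑ i, ‖inner ℝ (b i) x • b i‖ := norm_sum_le _ _
    _ = ∑ i, |inner ℝ x (b i)| := by simp [norm_smul, real_inner_comm]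

section Kernel

open Module

variable {E F : Type*} [NormedAddCommGroup E] [InnerProductSpace ℝ E] [FiniteDimensional ℝ E]
  [MeasurableSpace E] [BorelSpace E]

open scoped Convolution in
theorem fourierInv_mul_fourier_eq_convolution {M g : E → ℂ} (hM : Integrable M)
    (hg : Integrable g) :
    𝓕⁻ (fun ξ => M ξ * 𝓕 g ξ) = g ⋆[ContinuousLinearMap.mul ℂ ℂ] 𝓕⁻ M := by
  ext x
  have hint : Integrable fun ξ => 𝐞 (inner ℝ ξ x) • M ξ := by
    simpa using (Real.fourierIntegral_convergent_iff (f := M) (-x)).2 hM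
  have hker : ∀ y, VectorFourier.fourierIntegral 𝐞 volume (innerₗ E)
      (fun ξ => 𝐞 (inner ℝ ξ x) • M ξ) y = 𝓕⁻ M (x - y) := by
    intro y
    rw [Real.fourierInv_eq]
    refine integral_congr_ae (.of_forall fun ξ => ?_)
    simp only [innerₗ_apply_apply, smul_smul, ← AddChar.map_add_eq_mul, inner_sub_right]
    congr 2
    ring
  have h := VectorFourier.integral_fourierIntegral_smul_eq_flip (e := 𝐞) (μ := volume)
    (ν := volume) (L := innerₗ E) Real.continuous_fourierChar continuous_inner hg hint
  rw [flip_innerₗ] at h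
  simp only [hker] at h
  refine Eq.trans ?_ h
  rw [Real.fourierInv_eq]
  refine integral_congr_ae (.of_forall fun ξ => ?_)
  change _ = 𝓕 g ξ * _
  simp only [Circle.smul_def, smul_eq_mul]
  ring

open scoped Convolution in
theorem enorm_convolution_mul_le {r s : ℝ≥0∞} [r.HolderConjugate s] {g k : E → ℂ}
    (hg : AEStronglyMeasurable g volume) (hk : AEStronglyMeasurable k volume) (x : E) :
    ‖(g ⋆[ContinuousLinearMap.mul ℂ ℂ] k) x‖ₑ ≤ eLpNorm g r volume * eLpNorm k s volume := by
  have hx := Measure.measurePreserving_sub_left (volume : Measure E) x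
  calc ‖(g ⋆[ContinuousLinearMap.mul ℂ ℂ] k) x‖ₑ
      ≤ ∫⁻ y, ‖g y * k (x - y)‖ₑ := enorm_integral_le_lintegral_enorm _
    _ = eLpNorm (g • (k ∘ fun y => x - y)) 1 volume := by
      rw [eLpNorm_one_eq_lintegral_enorm]
      rfl
    _ ≤ eLpNorm g r volume * eLpNorm (k ∘ fun y => x - y) s volume :=
      eLpNorm_smul_le_mul_eLpNorm (hk.comp_measurePreserving hx) hg
    _ = eLpNorm g r volume * eLpNorm k s volume := by
      rw [eLpNorm_comp_measurePreserving hk hx]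

theorem eLpNorm_fourier_two_le_of_norm_le [NormedAddCommGroup F] [InnerProductSpace ℂ F]
    [CompleteSpace F] {h : E → F} {A R : ℝ} (hA : ∀ ξ, ‖h ξ‖ ≤ A)
    (hR : ∀ ξ, R < ‖ξ‖ → h ξ = 0) :
    eLpNorm (𝓕 h) 2 volume ≤
      volume (Metric.closedBall (0 : E) R) ^ (2⁻¹ : ℝ) * ENNReal.ofReal A := by
  have hsupp : Function.support h ⊆ Metric.closedBall 0 R := fun ξ hξ => by
    by_contra hlt
    exact hξ (hR ξ (by simpa using hlt))
  refine (eLpNorm_fourier_le h).trans ?_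
  rw [← eLpNorm_restrict_eq_of_support_subset hsupp]
  simpa using eLpNorm_le_of_ae_bound (p := 2)
    (μ := volume.restrict (Metric.closedBall (0 : E) R)) (.of_forall hA)

theorem abs_inner_mul_norm_fourier_le {M : E → ℂ} (hM : ContDiff ℝ 1 M)
    (hMs : HasCompactSupport M) (v x : E) :
    |inner ℝ x v| * ‖𝓕 M x‖ ≤ ‖𝓕 (fun ξ => fderiv ℝ M ξ v) x‖ := by
  have hint : Integrable M := hM.continuous.integrable_of_hasCompactSupport hMs
  have hint' : Integrable (fderiv ℝ M) :=
    (hM.continuous_fderiv one_ne_zero).integrable_of_hasCompactSupport (hMs.fderiv ℝ)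
  have hnorm : ‖𝓕 (fun ξ => fderiv ℝ M ξ v) x‖ = 2 * π * (|inner ℝ x v| * ‖𝓕 M x‖) := by
    rw [← Real.fourier_continuousLinearMap_apply hint',
      Real.fourier_fderiv hint (hM.differentiable one_ne_zero) hint']
    have hinner : innerSL ℝ x v = inner ℝ x v := rfl
    simp [VectorFourier.fourierSMulRight_apply, hinner, abs_of_pos Real.pi_pos, mul_assoc]
  rw [hnorm]
  exact le_mul_of_one_le_left (by positivity) (by linarith [Real.pi_gt_three])

namespace IsAdaptedSymbol

variable {R A : ℝ} {M : E → ℂ}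

theorem integrable (hM : IsAdaptedSymbol R A M) : Integrable M :=
  hM.contDiff.continuous.integrable_of_hasCompactSupport hM.hasCompactSupport

theorem eLpNorm_fourier_fderiv_apply_le (hM : IsAdaptedSymbol R A M) (hR : 0 < R) {v : E}
    (hv : ‖v‖ = 1) :
    eLpNorm (fun x => R * ‖𝓕 (fun ξ => fderiv ℝ M ξ v) x‖) 2 volume ≤
      volume (Metric.closedBall (0 : E) R) ^ (2⁻¹ : ℝ) * ENNReal.ofReal A := by
  have hderiv : ∀ ξ, ‖fderiv ℝ M ξ v‖ ≤ A / R := fun ξ => by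
    rw [le_div_iff₀' hR]
    refine le_trans ?_ (hM.mul_norm_fderiv_le ξ)
    gcongr
    simpa [hv] using (fderiv ℝ M ξ).le_opNorm v
  have hsmul := eLpNorm_const_smul R (fun x => ‖𝓕 (fun ξ => fderiv ℝ M ξ v) x‖) 2
    (volume : Measure E)
  rw [eLpNorm_norm, Real.enorm_of_nonneg hR.le] at hsmul
  calc _ = ENNReal.ofReal R * eLpNorm (𝓕 fun ξ => fderiv ℝ M ξ v) 2 volume := hsmul
    _ ≤ ENNReal.ofReal R *
        (volume (Metric.closedBall (0 : E) R) ^ (2⁻¹ : ℝ) * ENNReal.ofReal (A / R)) := by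
      gcongr
      exact eLpNorm_fourier_two_le_of_norm_le hderiv fun ξ hξ => by
        simp [hM.fderiv_eq_zero_of_lt_norm hξ]
    _ = _ := by
      rw [mul_left_comm, ← ENNReal.ofReal_mul hR.le, mul_div_cancel₀ _ hR.ne']

theorem eLpNorm_weight_mul_fourier_le (hM : IsAdaptedSymbol R A M) (hR : 0 < R) :
    eLpNorm (fun x => ((1 + R * ‖x‖ : ℝ) : ℂ) * 𝓕 M x) 2 volume ≤
      (1 + finrank ℝ E) *
        (volume (Metric.closedBall (0 : E) R) ^ (2⁻¹ : ℝ) * ENNReal.ofReal A) := by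
  let b := stdOrthonormalBasis ℝ E
  let D : Fin (finrank ℝ E) → E → ℝ := fun i x => R * ‖𝓕 (fun ξ => fderiv ℝ M ξ (b i)) x‖
  set B := volume (Metric.closedBall (0 : E) R) ^ (2⁻¹ : ℝ) * ENNReal.ofReal A
  have hDmeas : ∀ i, AEStronglyMeasurable (D i) volume := fun i =>
    ((continuous_fourier _).norm.const_mul R).aestronglyMeasurable
  have hMmeas : AEStronglyMeasurable (fun x => ‖𝓕 M x‖) volume :=
    (continuous_fourier M).norm.aestronglyMeasurable
  have hpt : ∀ x, ‖((1 + R * ‖x‖ : ℝ) : ℂ) * 𝓕 M x‖ ≤ ‖𝓕 M x‖ + (∑ i, D i) x := by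
    intro x
    rw [norm_mul, Complex.norm_real, Real.norm_of_nonneg (by positivity), add_mul, one_mul,
      Finset.sum_apply]
    gcongr
    calc R * ‖x‖ * ‖𝓕 M x‖ ≤ R * (∑ i, |inner ℝ x (b i)|) * ‖𝓕 M x‖ := by
          gcongr
          exact norm_le_sum_abs_inner b x
      _ = ∑ i, R * (|inner ℝ x (b i)| * ‖𝓕 M x‖) := by
          simp only [Finset.mul_sum, Finset.sum_mul, mul_assoc]
      _ ≤ ∑ i, D i x := Finset.sum_le_sum fun i _ => mul_le_mul_of_nonneg_left
          (abs_inner_mul_norm_fourier_le hM.contDiff hM.hasCompactSupport (b i) x) hR.le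
  calc eLpNorm (fun x => ((1 + R * ‖x‖ : ℝ) : ℂ) * 𝓕 M x) 2 volume
      ≤ eLpNorm ((fun x => ‖𝓕 M x‖) + ∑ i, D i) 2 volume := eLpNorm_mono_real hpt
    _ ≤ eLpNorm (fun x => ‖𝓕 M x‖) 2 volume + ∑ i, eLpNorm (D i) 2 volume :=
      (eLpNorm_add_le hMmeas (Finset.aestronglyMeasurable_sum _ fun i _ => hDmeas i)
        (by norm_num)).trans (add_le_add_right
          (eLpNorm_sum_le (fun i _ => hDmeas i) (by norm_num)) _)
    _ ≤ B + ∑ _i : Fin (finrank ℝ E), B := by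
      gcongr with i
      · rw [eLpNorm_norm]
        exact eLpNorm_fourier_two_le_of_norm_le hM.norm_le hM.eq_zero_of_lt_norm
      · exact hM.eLpNorm_fourier_fderiv_apply_le hR (b.norm_eq_one i)
    _ = (1 + finrank ℝ E) * B := by simp [add_mul]

end IsAdaptedSymbol

theorem exists_eLpNorm_fourier_le {p : ℝ} (hp : finrank ℝ E < p) (s : ℝ≥0∞)
    [ENNReal.HolderTriple (ENNReal.ofReal p) 2 s] :
    ∃ C : ℝ≥0∞, C ≠ ⊤ ∧ ∀ (R A : ℝ) (M : E → ℂ), 0 < R → IsAdaptedSymbol R A M →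
      eLpNorm (𝓕 M) s volume ≤
        C * ENNReal.ofReal (A * R ^ ((finrank ℝ E : ℝ) / 2 - finrank ℝ E / p)) := by
  have hp0 : 0 < p := (Nat.cast_nonneg _).trans_lt hp
  let w : E → ℂ := fun x => (((1 + ‖x‖)⁻¹ : ℝ) : ℂ)
  have hw : Continuous w := Complex.continuous_ofReal.comp
    (Continuous.inv₀ (by fun_prop) fun x => by positivity)
  have hwtop : eLpNorm w (ENNReal.ofReal p) volume ≠ ⊤ := by
    convert! eLpNorm_inv_one_add_norm_ne_top (E := E) volume hp using 1
    exact eLpNorm_congr_norm_ae (.of_forall fun x => Complex.norm_real _)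
  set n : ℝ := (finrank ℝ E : ℝ)
  refine ⟨eLpNorm w (ENNReal.ofReal p) volume *
    ((1 + finrank ℝ E) * volume (Metric.ball (0 : E) 1) ^ (2⁻¹ : ℝ)), ?_, ?_⟩
  · finiteness
  intro R A M hR hM
  have hfactor : 𝓕 M = (fun x => w (R • x)) • fun x => ((1 + R * ‖x‖ : ℝ) : ℂ) * 𝓕 M x := by
    ext x
    have h0 : ((1 + R * ‖x‖ : ℝ) : ℂ) ≠ 0 := Complex.ofReal_ne_zero.2 (by positivity)
    simp [w, norm_smul, abs_of_pos hR, -Complex.ofReal_add, inv_mul_cancel_left₀ h0]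
  have hexp : R ^ (-n / p) * (R ^ (n / 2) * A) = A * R ^ (n / 2 - n / p) := by
    rw [← mul_assoc, ← Real.rpow_add hR, mul_comm]
    ring_nf
  calc eLpNorm (𝓕 M) s volume
      ≤ eLpNorm (fun x => w (R • x)) (ENNReal.ofReal p) volume *
          eLpNorm (fun x => ((1 + R * ‖x‖ : ℝ) : ℂ) * 𝓕 M x) 2 volume := by
        conv_lhs => rw [hfactor]
        have := continuous_fourier M
        exact eLpNorm_smul_le_mul_eLpNorm (by fun_prop) (by fun_prop)
    _ ≤ ENNReal.ofReal (R ^ (-n / p)) * eLpNorm w (ENNReal.ofReal p) volume *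
          ((1 + finrank ℝ E) * (ENNReal.ofReal (R ^ (n / 2)) *
            volume (Metric.ball (0 : E) 1) ^ (2⁻¹ : ℝ) * ENNReal.ofReal A)) := by
        rw [eLpNorm_comp_smul volume hw _ hR, ENNReal.toReal_ofReal hp0.le, div_eq_mul_inv n 2,
          ← addHaar_closedBall_rpow volume hR.le (by norm_num)]
        gcongr
        exact hM.eLpNorm_weight_mul_fourier_le hR
    _ = _ := by
        rw [← hexp, ENNReal.ofReal_mul (by positivity), ENNReal.ofReal_mul (by positivity)]
        ring

/-- Bernstein's inequality. -/
theorem exists_enorm_fourierInv_mul_fourier_le {p : ℝ} (hp : finrank ℝ E < p) (r : ℝ≥0∞)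
    [ENNReal.HolderTriple (ENNReal.ofReal p) r 2] :
    ∃ C : ℝ≥0∞, C ≠ ⊤ ∧ ∀ (R A : ℝ) (M : E → ℂ), 0 < R → IsAdaptedSymbol R A M →
      ∀ g : E → ℂ, Integrable g → ∀ x, ‖𝓕⁻ (fun ξ => M ξ * 𝓕 g ξ) x‖ₑ ≤
        C * ENNReal.ofReal (A * R ^ ((finrank ℝ E : ℝ) / 2 - finrank ℝ E / p)) *
          eLpNorm g r volume := by
  let s : ℝ≥0∞ := ((ENNReal.ofReal p)⁻¹ + 2⁻¹)⁻¹
  have : ENNReal.HolderTriple (ENNReal.ofReal p) 2 s := .of _ _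
  have : r.HolderConjugate s := ⟨by
    rw [inv_inv, ← add_assoc, add_comm r⁻¹,
      ENNReal.HolderTriple.inv_add_inv_eq_inv (ENNReal.ofReal p) r 2, ENNReal.inv_two_add_inv_two,
      inv_one]⟩
  obtain ⟨C, hC, hker⟩ := exists_eLpNorm_fourier_le hp s
  refine ⟨C, hC, fun R A M hR hM g hg x => ?_⟩
  rw [fourierInv_mul_fourier_eq_convolution hM.integrable hg, mul_comm _ (eLpNorm g r volume)]
  refine (enorm_convolution_mul_le (r := r) (s := s) hg.1
    (continuous_fourierInv M).aestronglyMeasurable x).trans ?_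
  gcongr
  exact (eLpNorm_fourierInv_eq M s).trans_le (hker R A M hR hM)

end Kernel

section LocalizedSymbol

variable {E F : Type*} [NormedAddCommGroup E] [NormedAddCommGroup F] [NormedSpace ℝ F]

theorem contDiff_of_eq_zero_of_norm_lt [NormedSpace ℝ E] {n : WithTop ℕ∞} {f : E → F} {ε : ℝ}
    (hε : 0 < ε) (h0 : ∀ x, ‖x‖ < ε → f x = 0) (hf : ∀ x, x ≠ 0 → ContDiffAt ℝ n f x) :
    ContDiff ℝ n f := by
  rw [contDiff_iff_contDiffAt]
  intro x
  by_cases hx : x = 0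
  · have hev : f =ᶠ[nhds x] fun _ => 0 := by
      filter_upwards [Metric.ball_mem_nhds x hε] with y hy
      exact h0 y (by simpa [hx] using hy)
    exact contDiffAt_const.congr_of_eventuallyEq hev
  · exact hf x hx

/-- The first-order Mikhlin condition at frequencies `|ξ| ≥ r`, with constant `B`: the symbol `G` is
`C¹` away from the origin, and `G` and `|ξ| ∇G` are bounded by `B` for `|ξ| ≥ r`. -/
structure IsMikhlinSymbol [NormedSpace ℝ E] (r B : ℝ) (G : E → F) : Prop where
  nonneg : 0 ≤ B
  contDiffAt : ∀ ξ, ξ ≠ 0 → ContDiffAt ℝ 1 G ξ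
  norm_le : ∀ ξ, r ≤ ‖ξ‖ → ‖G ξ‖ ≤ B
  norm_mul_norm_fderiv_le : ∀ ξ, r ≤ ‖ξ‖ → ‖ξ‖ * ‖fderiv ℝ G ξ‖ ≤ B

namespace IsMikhlinSymbol

variable {r : ℝ}

theorem one [NormedSpace ℝ E] (r : ℝ) : IsMikhlinSymbol r 1 fun _ : E => (1 : ℂ) where
  nonneg := zero_le_one
  contDiffAt _ _ := contDiffAt_const
  norm_le _ _ := by simp
  norm_mul_norm_fderiv_le _ _ := by simp

theorem ofReal [NormedSpace ℝ E] {B : ℝ} {G : E → ℝ} (hr : 0 < r) (hG : IsMikhlinSymbol r B G) :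
    IsMikhlinSymbol r B fun ξ => (G ξ : ℂ) where
  nonneg := hG.nonneg
  contDiffAt ξ hξ := Complex.ofRealCLM.contDiff.contDiffAt.comp ξ (hG.contDiffAt ξ hξ)
  norm_le ξ hξ := by simpa using hG.norm_le ξ hξ
  norm_mul_norm_fderiv_le ξ hξ := by
    have hdiff : DifferentiableAt ℝ G ξ :=
      (hG.contDiffAt ξ (norm_pos_iff.1 (hr.trans_le hξ))).differentiableAt one_ne_zero
    have hfd : fderiv ℝ (fun ξ => (G ξ : ℂ)) ξ = Complex.ofRealCLM.comp (fderiv ℝ G ξ) :=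
      (Complex.ofRealCLM.hasFDerivAt.comp ξ hdiff.hasFDerivAt).fderiv
    rw [hfd]
    refine le_trans ?_ (hG.norm_mul_norm_fderiv_le ξ hξ)
    gcongr
    simpa using Complex.ofRealCLM.opNorm_comp_le (fderiv ℝ G ξ)

theorem mul [NormedSpace ℝ E] {B₁ B₂ : ℝ} {G₁ G₂ : E → ℝ} (hr : 0 < r)
    (h₁ : IsMikhlinSymbol r B₁ G₁) (h₂ : IsMikhlinSymbol r B₂ G₂) :
    IsMikhlinSymbol r (2 * (B₁ * B₂)) fun ξ => G₁ ξ * G₂ ξ where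
  nonneg := mul_nonneg zero_le_two (mul_nonneg h₁.nonneg h₂.nonneg)
  contDiffAt ξ hξ := (h₁.contDiffAt ξ hξ).mul (h₂.contDiffAt ξ hξ)
  norm_le ξ hξ := by
    have h : ‖G₁ ξ * G₂ ξ‖ ≤ B₁ * B₂ := by
      rw [norm_mul]
      exact mul_le_mul (h₁.norm_le ξ hξ) (h₂.norm_le ξ hξ) (norm_nonneg _) h₁.nonneg
    linarith [mul_nonneg h₁.nonneg h₂.nonneg]
  norm_mul_norm_fderiv_le ξ hξ := by
    have hξ0 : ξ ≠ 0 := norm_pos_iff.1 (hr.trans_le hξ)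
    rw [fderiv_fun_mul ((h₁.contDiffAt ξ hξ0).differentiableAt one_ne_zero)
      ((h₂.contDiffAt ξ hξ0).differentiableAt one_ne_zero)]
    calc ‖ξ‖ * ‖G₁ ξ • fderiv ℝ G₂ ξ + G₂ ξ • fderiv ℝ G₁ ξ‖
        ≤ ‖ξ‖ * (‖G₁ ξ‖ * ‖fderiv ℝ G₂ ξ‖ + ‖G₂ ξ‖ * ‖fderiv ℝ G₁ ξ‖) := by
          gcongr
          exact (norm_add_le _ _).trans_eq (by rw [norm_smul, norm_smul])
      _ = ‖G₁ ξ‖ * (‖ξ‖ * ‖fderiv ℝ G₂ ξ‖) + ‖G₂ ξ‖ * (‖ξ‖ * ‖fderiv ℝ G₁ ξ‖) := by ring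
      _ ≤ B₁ * B₂ + B₂ * B₁ := add_le_add
          (mul_le_mul (h₁.norm_le ξ hξ) (h₂.norm_mul_norm_fderiv_le ξ hξ) (by positivity) h₁.nonneg)
          (mul_le_mul (h₂.norm_le ξ hξ) (h₁.norm_mul_norm_fderiv_le ξ hξ) (by positivity) h₂.nonneg)
      _ = 2 * (B₁ * B₂) := by ring

theorem comp_norm [InnerProductSpace ℝ E] {B : ℝ} {φ : ℝ → ℝ} (hr : 0 < r)
    (hφ : ∀ s, 0 < s → ContDiffAt ℝ 1 φ s) (hB : ∀ s, r ≤ s → |φ s| ≤ B)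
    (hB' : ∀ s, r ≤ s → s * |deriv φ s| ≤ B) : IsMikhlinSymbol r B fun ξ : E => φ ‖ξ‖ where
  nonneg := (abs_nonneg _).trans (hB r le_rfl)
  contDiffAt ξ hξ := (hφ ‖ξ‖ (norm_pos_iff.2 hξ)).comp ξ (contDiffAt_norm ℝ hξ)
  norm_le ξ hξ := hB ‖ξ‖ hξ
  norm_mul_norm_fderiv_le ξ hξ := by
    have hξ0 : 0 < ‖ξ‖ := hr.trans_le hξ
    have hnorm : DifferentiableAt ℝ norm ξ :=
      (contDiffAt_norm ℝ (norm_pos_iff.1 hξ0)).differentiableAt one_ne_zero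
    have hfd : fderiv ℝ (fun ξ : E => φ ‖ξ‖) ξ = deriv φ ‖ξ‖ • fderiv ℝ norm ξ :=
      (((hφ ‖ξ‖ hξ0).differentiableAt one_ne_zero).hasDerivAt.comp_hasFDerivAt ξ
        hnorm.hasFDerivAt).fderiv
    rw [hfd, norm_smul, Real.norm_eq_abs]
    refine le_trans ?_ (hB' ‖ξ‖ hξ)
    gcongr
    refine mul_le_of_le_one_right (abs_nonneg _) ?_
    simpa using norm_fderiv_le_of_lipschitz ℝ lipschitzWith_one_norm (x₀ := ξ)

end IsMikhlinSymbol

end LocalizedSymbol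

section Cutoff

/-- A cutoff equal to `1` on the support of `rho χ` and supported in the slightly larger annulus
`1/4 ≤ s ≤ 4`. -/
def wideRho (χ : ℝ → ℝ) (s : ℝ) : ℝ := χ (s / 2) - χ (4 * s)

namespace IsCutoff

variable {χ : ℝ → ℝ}

theorem eq_one (hχ : IsCutoff χ) {s : ℝ} (h0 : 0 ≤ s) (h1 : s ≤ 1) : χ s = 1 :=
  hχ.2.2.2.1 s ⟨by linarith, h1⟩

theorem eq_zero_of_two_le (hχ : IsCutoff χ) {s : ℝ} (hs : 2 ≤ s) : χ s = 0 := by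
  have hclosed : IsClosed {t | χ t = 0} := isClosed_eq hχ.1.continuous continuous_const
  have hsub : Set.Ioi 2 ⊆ {t | χ t = 0} := fun t ht => by
    by_contra h
    exact absurd (hχ.2.2.2.2 h).2 (not_le.2 ht)
  exact hclosed.closure_subset_iff.2 hsub (closure_Ioi (2 : ℝ) ▸ hs)

theorem abs_sub_le_one (hχ : IsCutoff χ) (s t : ℝ) : |χ s - χ t| ≤ 1 := by
  have hs := hχ.2.2.1 s
  have ht := hχ.2.2.1 t
  rw [abs_le]
  constructor <;> linarith

theorem rho_eq_zero_of_le (hχ : IsCutoff χ) {s : ℝ} (h0 : 0 ≤ s) (hs : s ≤ 1 / 2) :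
    rho χ s = 0 := by
  rw [rho, hχ.eq_one h0 (by linarith), hχ.eq_one (by linarith) (by linarith), sub_self]

theorem rho_eq_zero_of_two_le (hχ : IsCutoff χ) {s : ℝ} (hs : 2 ≤ s) : rho χ s = 0 := by
  rw [rho, hχ.eq_zero_of_two_le hs, hχ.eq_zero_of_two_le (by linarith), sub_self]

theorem contDiff_rho (hχ : IsCutoff χ) : ContDiff ℝ (⊤ : ℕ∞) (rho χ) :=
  hχ.1.sub (hχ.1.comp (contDiff_const.mul contDiff_id))

theorem wideRho_eq_zero_of_le (hχ : IsCutoff χ) {s : ℝ} (h0 : 0 ≤ s) (hs : s ≤ 1 / 4) :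
    wideRho χ s = 0 := by
  rw [wideRho, hχ.eq_one (by linarith) (by linarith), hχ.eq_one (by linarith) (by linarith),
    sub_self]

theorem wideRho_eq_zero_of_four_le (hχ : IsCutoff χ) {s : ℝ} (hs : 4 ≤ s) : wideRho χ s = 0 := by
  rw [wideRho, hχ.eq_zero_of_two_le (by linarith), hχ.eq_zero_of_two_le (by linarith), sub_self]

theorem wideRho_eq_one (hχ : IsCutoff χ) {s : ℝ} (h1 : 1 / 2 ≤ s) (h2 : s ≤ 2) :
    wideRho χ s = 1 := by
  rw [wideRho, hχ.eq_one (by linarith) (by linarith), hχ.eq_zero_of_two_le (by linarith), sub_zero]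

theorem contDiff_wideRho (hχ : IsCutoff χ) : ContDiff ℝ (⊤ : ℕ∞) (wideRho χ) :=
  (hχ.1.comp (contDiff_id.div_const 2)).sub (hχ.1.comp (contDiff_const.mul contDiff_id))

theorem exists_lipschitzWith_wideRho (hχ : IsCutoff χ) : ∃ L, LipschitzWith L (wideRho χ) := by
  obtain ⟨L, hL⟩ := hχ.1.lipschitzWith_of_hasCompactSupport hχ.2.1 (by simp)
  have hhalf : LipschitzWith (1 / 2) fun s : ℝ => s / 2 := .of_dist_le_mul fun s t => by
    rw [Real.dist_eq, Real.dist_eq, ← sub_div, abs_div, abs_two]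
    exact le_of_eq (by push_cast; ring)
  have hfour : LipschitzWith 4 fun s : ℝ => 4 * s := .of_dist_le_mul fun s t => by
    simp [Real.dist_eq, ← mul_sub, abs_mul]
  exact ⟨_, (hL.comp hhalf).sub (hL.comp hfour)⟩

variable {E : Type*} [NormedAddCommGroup E] [InnerProductSpace ℝ E] {lam : ℝ}

theorem norm_fderiv_wideRho_le {L : NNReal} (hL : LipschitzWith L (wideRho χ)) (hlam : 0 < lam)
    (ξ : E) : lam * ‖fderiv ℝ (fun ξ : E => (wideRho χ (‖ξ‖ / lam) : ℂ)) ξ‖ ≤ L := by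
  have hlip : LipschitzWith (L / lam.toNNReal)
      fun ξ : E => (wideRho χ (‖ξ‖ / lam) : ℂ) := .of_dist_le_mul fun ξ η => by
    have h := hL.dist_le_mul (‖ξ‖ / lam) (‖η‖ / lam)
    rw [Complex.dist_eq, ← Complex.ofReal_sub, Complex.norm_real]
    refine h.trans ?_
    rw [Real.dist_eq, ← sub_div, abs_div, abs_of_pos hlam, dist_eq_norm, NNReal.coe_div,
      Real.coe_toNNReal _ hlam.le, div_mul_eq_mul_div, mul_div_assoc]
    gcongr
    exact abs_norm_sub_norm_le ξ η
  have h := norm_fderiv_le_of_lipschitz ℝ hlip (x₀ := ξ)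
  rwa [NNReal.coe_div, Real.coe_toNNReal _ hlam.le, le_div_iff₀' hlam] at h

theorem contDiffAt_wideRho_norm (hχ : IsCutoff χ) (lam : ℝ) {ξ : E} (hξ : ξ ≠ 0) :
    ContDiffAt ℝ 1 (fun ξ : E => (wideRho χ (‖ξ‖ / lam) : ℂ)) ξ :=
  Complex.ofRealCLM.contDiff.contDiffAt.comp ξ
    ((hχ.contDiff_wideRho.of_le (by simp)).contDiffAt.comp ξ
      ((contDiffAt_norm ℝ hξ).div_const lam))

theorem norm_wideRho_le_one (hχ : IsCutoff χ) (s : ℝ) : ‖(wideRho χ s : ℂ)‖ ≤ 1 := by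
  rw [Complex.norm_real]
  exact hχ.abs_sub_le_one _ _

theorem mul_norm_fderiv_wideRho_mul_le (hχ : IsCutoff χ) {L : NNReal}
    (hL : LipschitzWith L (wideRho χ)) (hlam : 0 < lam) {B : ℝ} {G : E → ℂ}
    (hG : IsMikhlinSymbol (lam / 4) B G) {ξ : E} (hξ : lam / 4 ≤ ‖ξ‖) :
    4 * lam * ‖fderiv ℝ (fun ξ => (wideRho χ (‖ξ‖ / lam) : ℂ) * G ξ) ξ‖ ≤ (16 + 4 * L) * B := by
  have hB := hG.nonneg
  have hξ0 : ξ ≠ 0 := norm_pos_iff.1 (by linarith)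
  rw [fderiv_fun_mul ((hχ.contDiffAt_wideRho_norm lam hξ0).differentiableAt one_ne_zero)
    ((hG.contDiffAt ξ hξ0).differentiableAt one_ne_zero)]
  calc 4 * lam * ‖(wideRho χ (‖ξ‖ / lam) : ℂ) • fderiv ℝ G ξ
        + G ξ • fderiv ℝ (fun ξ => (wideRho χ (‖ξ‖ / lam) : ℂ)) ξ‖
      ≤ 4 * lam * (1 * ‖fderiv ℝ G ξ‖
        + B * ‖fderiv ℝ (fun ξ => (wideRho χ (‖ξ‖ / lam) : ℂ)) ξ‖) := by
        gcongr
        refine (norm_add_le _ _).trans (add_le_add ?_ ?_) <;> rw [norm_smul]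
        · gcongr
          exact hχ.norm_wideRho_le_one _
        · gcongr
          exact hG.norm_le ξ hξ
    _ ≤ 16 * (‖ξ‖ * ‖fderiv ℝ G ξ‖)
        + 4 * (lam * ‖fderiv ℝ (fun ξ => (wideRho χ (‖ξ‖ / lam) : ℂ)) ξ‖) * B := by
        linarith [mul_le_mul_of_nonneg_right hξ (norm_nonneg (fderiv ℝ G ξ))]
    _ ≤ 16 * B + 4 * L * B := by
        gcongr
        · exact hG.norm_mul_norm_fderiv_le ξ hξ
        · exact norm_fderiv_wideRho_le hL hlam ξ
    _ = (16 + 4 * L) * B := by ring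

theorem exists_isAdaptedSymbol_wideRho_mul (hχ : IsCutoff χ) :
    ∃ L : ℝ, 0 ≤ L ∧ ∀ (lam B : ℝ) (G : E → ℂ), 0 < lam → IsMikhlinSymbol (lam / 4) B G →
      IsAdaptedSymbol (4 * lam) (L * B) fun ξ => wideRho χ (‖ξ‖ / lam) * G ξ := by
  obtain ⟨L, hL⟩ := hχ.exists_lipschitzWith_wideRho
  refine ⟨16 + 4 * L, by positivity, fun lam B G hlam hG => ?_⟩
  have hB := hG.nonneg
  have hlow : ∀ ξ : E, ‖ξ‖ < lam / 4 → (wideRho χ (‖ξ‖ / lam) : ℂ) * G ξ = 0 := fun ξ hξ => by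
    rw [hχ.wideRho_eq_zero_of_le (by positivity) (by rw [div_le_iff₀ hlam]; linarith)]
    simp
  refine ⟨contDiff_of_eq_zero_of_norm_lt (by positivity) hlow fun ξ hξ =>
    (hχ.contDiffAt_wideRho_norm lam hξ).mul (hG.contDiffAt ξ hξ), fun ξ hξ => ?_, fun ξ => ?_,
    fun ξ => ?_⟩
  · rw [hχ.wideRho_eq_zero_of_four_le (by rw [le_div_iff₀ hlam]; exact hξ.le)]
    simp
  · rcases lt_or_ge ‖ξ‖ (lam / 4) with h | h
    · rw [hlow ξ h, norm_zero]
      positivity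
    · calc ‖(wideRho χ (‖ξ‖ / lam) : ℂ) * G ξ‖ ≤ 1 * B := by
            rw [norm_mul]
            exact mul_le_mul (hχ.norm_wideRho_le_one _) (hG.norm_le ξ h) (norm_nonneg _)
              zero_le_one
        _ ≤ (16 + 4 * L) * B := by gcongr; linarith [L.coe_nonneg]
  · rcases lt_or_ge ‖ξ‖ (lam / 4) with h | h
    · have hev : (fun ξ => (wideRho χ (‖ξ‖ / lam) : ℂ) * G ξ) =ᶠ[nhds ξ] fun _ => 0 := by
        filter_upwards [(isOpen_lt continuous_norm continuous_const).mem_nhds h] with η hη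
        exact hlow η hη
      rw [hev.fderiv_eq]
      simp only [fderiv_fun_const, Pi.zero_apply, norm_zero, mul_zero]
      positivity
    · exact hχ.mul_norm_fderiv_wideRho_mul_le hL hlam hG h

end IsCutoff

end Cutoff

section Multiplier

variable {d : ℕ}

theorem continuous_mulOp (m f : Euc d → ℂ) : Continuous (mulOp m f) :=
  continuous_fourierInv _

theorem mulOp_eq_zero_of_not_integrable (m : Euc d → ℂ) {f : Euc d → ℂ} (hf : ¬ Integrable f) :
    mulOp m f = 0 := by
  ext x
  simp [mulOp, fourier_of_not_integrable hf, Real.fourierInv_eq]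

theorem eLpNorm_mulOp_le_of_norm_mul_fourier_le {m f : Euc d → ℂ} {A : ℝ}
    (h : ∀ ξ, ‖m ξ * 𝓕 f ξ‖ ≤ A * ‖𝓕 f ξ‖) :
    eLpNorm (mulOp m f) 2 volume ≤ ENNReal.ofReal A * eLpNorm f 2 volume :=
  calc eLpNorm (mulOp m f) 2 volume
      ≤ eLpNorm (fun ξ => m ξ * 𝓕 f ξ) 2 volume := eLpNorm_fourierInv_le _
    _ ≤ ENNReal.ofReal A * eLpNorm (𝓕 f) 2 volume :=
        eLpNorm_le_mul_eLpNorm_of_ae_le_mul (.of_forall h) 2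
    _ ≤ ENNReal.ofReal A * eLpNorm f 2 volume := by
        gcongr
        exact eLpNorm_fourier_le f

theorem eLpNorm_mulOp_le {m : Euc d → ℂ} {A : ℝ} (hm : ∀ ξ, ‖m ξ‖ ≤ A) (f : Euc d → ℂ) :
    eLpNorm (mulOp m f) 2 volume ≤ ENNReal.ofReal A * eLpNorm f 2 volume :=
  eLpNorm_mulOp_le_of_norm_mul_fourier_le fun ξ => by
    rw [norm_mul]
    gcongr
    exact hm ξ

theorem mulOp_schwartzMap_eq_convolution (R : SchwartzMap (Euc d) ℂ) {f : Euc d → ℂ}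
    (hf : Integrable f) :
    mulOp R f = convolution f (𝓕⁻ R : SchwartzMap (Euc d) ℂ) (ContinuousLinearMap.mul ℂ ℂ) := by
  rw [mulOp, fourierInv_mul_fourier_eq_convolution R.integrable hf, SchwartzMap.fourierInv_coe]

theorem integrable_mulOp_schwartzMap (R : SchwartzMap (Euc d) ℂ) (f : Euc d → ℂ) :
    Integrable (mulOp R f) := by
  by_cases hf : Integrable f
  · rw [mulOp_schwartzMap_eq_convolution R hf]
    exact hf.integrable_convolution _ (SchwartzMap.integrable _)
  · rw [mulOp_eq_zero_of_not_integrable _ hf]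
    exact integrable_zero _ _ _

theorem fourier_mulOp_schwartzMap (R : SchwartzMap (Euc d) ℂ) (f : Euc d → ℂ) (ξ : Euc d) :
    𝓕 (mulOp R f) ξ = R ξ * 𝓕 f ξ := by
  by_cases hf : Integrable f
  · rw [mulOp_schwartzMap_eq_convolution R hf,
      Real.fourier_mul_convolution_eq hf (SchwartzMap.integrable _), ← SchwartzMap.fourier_coe,
      FourierTransform.fourier_fourierInv_eq, mul_comm]
  · rw [mulOp_eq_zero_of_not_integrable _ hf, fourier_of_not_integrable hf]
    simp [Real.fourier_eq]

end Multiplier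

section Projection

variable {d : ℕ} {χ : ℝ → ℝ} {lam : ℝ}

theorem exists_schwartzMap_eq_rho (hχ : IsCutoff χ) (hlam : 0 < lam) :
    ∃ R : SchwartzMap (Euc d) ℂ, ∀ ξ, R ξ = (rho χ (‖ξ‖ / lam) : ℂ) := by
  have hsm : ContDiff ℝ (⊤ : ℕ∞) fun ξ : Euc d => (rho χ (‖ξ‖ / lam) : ℂ) := by
    refine Complex.ofRealCLM.contDiff.comp
      (contDiff_of_eq_zero_of_norm_lt (half_pos hlam) (fun ξ hξ => ?_) fun ξ hξ => ?_)
    · exact hχ.rho_eq_zero_of_le (by positivity) (by rw [div_le_iff₀ hlam]; linarith)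
    · exact hχ.contDiff_rho.contDiffAt.comp ξ ((contDiffAt_norm ℝ hξ).div_const lam)
  have hcs : HasCompactSupport fun ξ : Euc d => (rho χ (‖ξ‖ / lam) : ℂ) :=
    .intro (isCompact_closedBall 0 (2 * lam)) fun ξ hξ => by
      have hξ' : 2 * lam < ‖ξ‖ := by simpa using hξ
      rw [hχ.rho_eq_zero_of_two_le ((le_div_iff₀ hlam).2 hξ'.le), Complex.ofReal_zero]
  exact ⟨hcs.toSchwartzMap hsm, fun ξ => rfl⟩

theorem exists_schwartzMap_proj_eq (hχ : IsCutoff χ) (hlam : 0 < lam) :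
    ∃ R : SchwartzMap (Euc d) ℂ,
      (∀ ξ, R ξ = (rho χ (‖ξ‖ / lam) : ℂ)) ∧ ∀ f, proj χ lam f = mulOp R f := by
  obtain ⟨R, hR⟩ := exists_schwartzMap_eq_rho (d := d) hχ hlam
  exact ⟨R, hR, fun f => by rw [proj, ← funext hR]⟩

theorem integrable_proj (hχ : IsCutoff χ) (hlam : 0 < lam) (f : Euc d → ℂ) :
    Integrable (proj χ lam f) := by
  obtain ⟨R, -, hproj⟩ := exists_schwartzMap_proj_eq (d := d) hχ hlam
  rw [hproj]
  exact integrable_mulOp_schwartzMap R f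

theorem fourier_proj (hχ : IsCutoff χ) (hlam : 0 < lam) (f : Euc d → ℂ) (ξ : Euc d) :
    𝓕 (proj χ lam f) ξ = rho χ (‖ξ‖ / lam) * 𝓕 f ξ := by
  obtain ⟨R, hR, hproj⟩ := exists_schwartzMap_proj_eq (d := d) hχ hlam
  rw [hproj, fourier_mulOp_schwartzMap, hR]

theorem fourier_proj_eq_zero (hχ : IsCutoff χ) (hlam : 0 < lam) (f : Euc d → ℂ) {ξ : Euc d}
    (hξ : ¬ (lam / 2 ≤ ‖ξ‖ ∧ ‖ξ‖ ≤ 2 * lam)) : 𝓕 (proj χ lam f) ξ = 0 := by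
  rw [fourier_proj hχ hlam]
  rcases lt_or_ge ‖ξ‖ (lam / 2) with h | h
  · rw [hχ.rho_eq_zero_of_le (by positivity) (by rw [div_le_iff₀ hlam]; linarith)]
    simp
  · have h' : 2 * lam < ‖ξ‖ := not_le.1 fun h' => hξ ⟨h, h'⟩
    rw [hχ.rho_eq_zero_of_two_le ((le_div_iff₀ hlam).2 h'.le)]
    simp

theorem mulOp_one_proj (hχ : IsCutoff χ) (hlam : 0 < lam) (f : Euc d → ℂ) :
    mulOp (fun _ => 1) (proj χ lam f) = proj χ lam f := by
  simp only [mulOp, one_mul, fourier_proj hχ hlam]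
  rfl

theorem mulOp_wideRho_mul_proj (hχ : IsCutoff χ) (hlam : 0 < lam) (m f : Euc d → ℂ) :
    mulOp (fun ξ => wideRho χ (‖ξ‖ / lam) * m ξ) (proj χ lam f) = mulOp m (proj χ lam f) := by
  rw [mulOp, mulOp]
  congr 1
  ext ξ
  by_cases hξ : lam / 2 ≤ ‖ξ‖ ∧ ‖ξ‖ ≤ 2 * lam
  · rw [hχ.wideRho_eq_one (by rw [le_div_iff₀ hlam]; linarith) (by rw [div_le_iff₀ hlam]; linarith),
      Complex.ofReal_one, one_mul]
  · rw [fourier_proj_eq_zero hχ hlam f hξ, mul_zero, mul_zero]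

theorem eLpNorm_mulOp_proj_le (hχ : IsCutoff χ) (hlam : 0 < lam) {m : Euc d → ℂ} {B : ℝ}
    (hm : ∀ ξ, lam / 2 ≤ ‖ξ‖ → ‖m ξ‖ ≤ B) (f : Euc d → ℂ) :
    eLpNorm (mulOp m (proj χ lam f)) 2 volume ≤
      ENNReal.ofReal B * eLpNorm (proj χ lam f) 2 volume :=
  eLpNorm_mulOp_le_of_norm_mul_fourier_le fun ξ => by
    by_cases hξ : lam / 2 ≤ ‖ξ‖ ∧ ‖ξ‖ ≤ 2 * lam
    · rw [norm_mul]
      gcongr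
      exact hm ξ hξ.1
    · simp [fourier_proj_eq_zero hχ hlam f hξ]

theorem exists_enorm_mulOp_proj_le (hχ : IsCutoff χ) {p : ℝ} (hp : d < p) (r : ℝ≥0∞)
    [ENNReal.HolderTriple (ENNReal.ofReal p) r 2] :
    ∃ C : ℝ, 0 ≤ C ∧ ∀ (lam B : ℝ) (m : Euc d → ℂ), 0 < lam → IsMikhlinSymbol (lam / 4) B m →
      ∀ f x, ‖mulOp m (proj χ lam f) x‖ₑ ≤
        ENNReal.ofReal (C * B * lam ^ ((d : ℝ) / 2 - d / p)) * eLpNorm (proj χ lam f) r volume := by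
  have hfin : (Module.finrank ℝ (Euc d) : ℝ) = d := by simp
  obtain ⟨C, hCtop, hC⟩ :=
    exists_enorm_fourierInv_mul_fourier_le (E := Euc d) (p := p) (by rwa [hfin]) r
  obtain ⟨L, hL0, hL⟩ := hχ.exists_isAdaptedSymbol_wideRho_mul (E := Euc d)
  rw [hfin] at hC
  refine ⟨C.toReal * (L * 4 ^ ((d : ℝ) / 2 - d / p)), by positivity,
    fun lam B m hlam hm f x => ?_⟩
  have h := hC _ _ _ (by positivity) (hL lam B m hlam hm) _ (integrable_proj hχ hlam f) x
  rw [← mulOp_wideRho_mul_proj hχ hlam]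
  refine h.trans_eq ?_
  rw [← ENNReal.ofReal_toReal hCtop, ← ENNReal.ofReal_mul ENNReal.toReal_nonneg,
    Real.mul_rpow (by norm_num) hlam.le, ENNReal.toReal_ofReal ENNReal.toReal_nonneg]
  congr 2
  ring

end Projection

section Tanh

theorem tanh_pos_of_pos {s : ℝ} (hs : 0 < s) : 0 < Real.tanh s := by
  rw [Real.tanh_eq_sinh_div_cosh]
  exact div_pos (Real.sinh_pos_iff.2 hs) (Real.cosh_pos s)

theorem hasDerivAt_tanh (s : ℝ) : HasDerivAt Real.tanh (1 / Real.cosh s ^ 2) s := by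
  have h := (Real.hasDerivAt_sinh s).div (Real.hasDerivAt_cosh s) (Real.cosh_pos s).ne'
  rw [← sq, ← sq, Real.cosh_sq_sub_sinh_sq] at h
  rwa [show Real.tanh = Real.sinh / Real.cosh from funext Real.tanh_eq_sinh_div_cosh]

theorem contDiff_tanh {n : WithTop ℕ∞} : ContDiff ℝ n Real.tanh := by
  rw [show Real.tanh = Real.sinh / Real.cosh from funext Real.tanh_eq_sinh_div_cosh]
  exact Real.contDiff_sinh.div Real.contDiff_cosh fun s => (Real.cosh_pos s).ne'

theorem div_cosh_sq_le_tanh {s : ℝ} (hs : 0 ≤ s) : s / Real.cosh s ^ 2 ≤ Real.tanh s :=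
  calc s / Real.cosh s ^ 2 ≤ Real.sinh s / Real.cosh s ^ 1 :=
        div_le_div₀ (Real.sinh_nonneg_iff.2 hs) (Real.self_le_sinh_iff.2 hs)
          (pow_pos (Real.cosh_pos s) 1) (pow_le_pow_right₀ (Real.one_le_cosh s) one_le_two)
    _ = Real.tanh s := by rw [pow_one, Real.tanh_eq_sinh_div_cosh]

theorem tanh_le_self {s : ℝ} (hs : 0 ≤ s) : Real.tanh s ≤ s := by
  have hderiv : ∀ t, deriv Real.tanh t ≤ 1 := fun t => by
    rw [(hasDerivAt_tanh t).deriv]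
    exact div_le_one_of_le₀ (one_le_pow₀ (Real.one_le_cosh t)) (by positivity)
  simpa using image_sub_le_mul_sub_of_deriv_le (fun t => (hasDerivAt_tanh t).differentiableAt)
    hderiv hs

end Tanh

theorem jap_pos (x : ℝ) : 0 < jap x := Real.sqrt_pos.2 (by positivity)

theorem le_jap (x : ℝ) : x ≤ jap x := Real.le_sqrt_of_sq_le (by linarith)

section SqrtK

/-- The radial profile `s ↦ (tanh s / s)^{1/2}` of the symbol of `√K`. -/
def sqrtKProfile (s : ℝ) : ℝ := √(Real.tanh s / s)

theorem sqrtKProfile_pos {s : ℝ} (hs : 0 < s) : 0 < sqrtKProfile s :=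
  Real.sqrt_pos.2 (div_pos (tanh_pos_of_pos hs) hs)

theorem sq_sqrtKProfile {s : ℝ} (hs : 0 < s) : sqrtKProfile s ^ 2 = Real.tanh s / s :=
  Real.sq_sqrt (div_pos (tanh_pos_of_pos hs) hs).le

theorem contDiffAt_sqrtKProfile {n : WithTop ℕ∞} {s : ℝ} (hs : 0 < s) :
    ContDiffAt ℝ n sqrtKProfile s :=
  (contDiff_tanh.contDiffAt.div contDiffAt_id hs.ne').sqrt (div_pos (tanh_pos_of_pos hs) hs).ne'

theorem mul_abs_deriv_sqrtKProfile_le {s : ℝ} (hs : 0 < s) :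
    s * |deriv sqrtKProfile s| ≤ sqrtKProfile s := by
  have hF := sqrtKProfile_pos hs
  have hT := tanh_pos_of_pos hs
  have hd : HasDerivAt sqrtKProfile
      ((1 / Real.cosh s ^ 2 * s - Real.tanh s * 1) / s ^ 2 / (2 * sqrtKProfile s)) s :=
    ((hasDerivAt_tanh s).div (hasDerivAt_id s) hs.ne').sqrt (div_pos hT hs).ne'
  have hnum : |1 / Real.cosh s ^ 2 * s - Real.tanh s * 1| ≤ Real.tanh s := by
    have h := div_cosh_sq_le_tanh hs.le
    have h0 : 0 ≤ s / Real.cosh s ^ 2 := by positivity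
    rw [one_div_mul_eq_div, mul_one, abs_le]
    constructor <;> linarith
  rw [hd.deriv, abs_div, abs_div, abs_of_pos (pow_pos hs 2), abs_of_pos (mul_pos two_pos hF)]
  calc s * (|1 / Real.cosh s ^ 2 * s - Real.tanh s * 1| / s ^ 2 / (2 * sqrtKProfile s))
      ≤ s * (Real.tanh s / s ^ 2 / (2 * sqrtKProfile s)) := by gcongr
    _ = Real.tanh s / s / (2 * sqrtKProfile s) := by field_simp
    _ = sqrtKProfile s / 2 := by rw [← sq_sqrtKProfile hs]; field_simp
    _ ≤ sqrtKProfile s := half_le_self hF.le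

theorem sqrtKProfile_le_jap {lam s : ℝ} (hlam : 0 < lam) (hs : lam / 4 ≤ s) :
    sqrtKProfile s ≤ 3 * jap lam ^ (-(1 : ℝ) / 2) := by
  have hs0 : 0 < s := by linarith
  have hj0 := jap_pos lam
  have hj : jap lam ≤ 1 + lam := Real.sqrt_le_iff.2 ⟨by positivity, by nlinarith⟩
  have hJ : (jap lam ^ (-(1 : ℝ) / 2)) ^ 2 = (jap lam)⁻¹ := by
    rw [← Real.rpow_natCast, ← Real.rpow_mul hj0.le, ← Real.rpow_neg_one]
    norm_num
  refine le_of_sq_le_sq ?_ (by positivity)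
  rw [mul_pow, hJ, sq_sqrtKProfile hs0, ← div_eq_mul_inv, div_le_div_iff₀ hs0 hj0]
  calc Real.tanh s * jap lam ≤ Real.tanh s * (1 + lam) := by
        gcongr
        exact (tanh_pos_of_pos hs0).le
    _ = Real.tanh s + Real.tanh s * lam := by ring
    _ ≤ s + 1 * (4 * s) := by
        gcongr
        · exact tanh_le_self hs0.le
        · exact (Real.tanh_lt_one s).le
        · linarith
    _ ≤ 3 ^ 2 * s := by linarith

end SqrtK

section RieszSqrtK

variable {d : ℕ} {lam : ℝ}

theorem isMikhlinSymbol_sqrt_Ksym (hlam : 0 < lam) :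
    IsMikhlinSymbol (lam / 4) (3 * jap lam ^ (-(1 : ℝ) / 2)) fun ξ : Euc d => √(Ksym ξ) :=
  have hpos : ∀ {s}, lam / 4 ≤ s → 0 < s := fun hs => (by positivity : 0 < lam / 4).trans_le hs
  .comp_norm (φ := sqrtKProfile) (by positivity) (fun _ => contDiffAt_sqrtKProfile)
    (fun s hs => (abs_of_pos (sqrtKProfile_pos (hpos hs))).trans_le (sqrtKProfile_le_jap hlam hs))
    fun s hs => (mul_abs_deriv_sqrtKProfile_le (hpos hs)).trans (sqrtKProfile_le_jap hlam hs)

theorem abs_rzSym_le_one (j : Fin d) (ξ : Euc d) : |rzSym j ξ| ≤ 1 := by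
  rw [rzSym, abs_div, abs_norm]
  exact div_le_one_of_le₀ (PiLp.norm_apply_le ξ j) (norm_nonneg _)

theorem contDiffAt_rzSym (j : Fin d) {ξ : Euc d} (hξ : ξ ≠ 0) : ContDiffAt ℝ 1 (rzSym j) ξ :=
  ContDiffAt.div (by fun_prop) (contDiffAt_norm ℝ hξ) (norm_ne_zero_iff.2 hξ)

-- Differentiating `rzSym j η * ‖η‖ = η j` avoids an explicit formula for the gradient.
theorem norm_mul_norm_fderiv_rzSym_le (j : Fin d) {ξ : Euc d} (hξ : ξ ≠ 0) :
    ‖ξ‖ * ‖fderiv ℝ (rzSym j) ξ‖ ≤ 2 := by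
  have hprod : (fun η : Euc d => rzSym j η * ‖η‖) = EuclideanSpace.proj (𝕜 := ℝ) j := by
    ext η
    rcases eq_or_ne η 0 with rfl | hη
    · simp
    · exact div_mul_cancel₀ _ (norm_ne_zero_iff.2 hη)
  have hfd := fderiv_fun_mul ((contDiffAt_rzSym j hξ).differentiableAt one_ne_zero)
    ((contDiffAt_norm ℝ hξ (n := 1)).differentiableAt one_ne_zero)
  rw [hprod, ContinuousLinearMap.fderiv] at hfd
  have hproj : ‖(EuclideanSpace.proj j : Euc d →L[ℝ] ℝ)‖ ≤ 1 :=
    ContinuousLinearMap.opNorm_le_bound _ zero_le_one fun x => by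
      simpa using PiLp.norm_apply_le x j
  have hnorm : ‖fderiv ℝ norm ξ‖ ≤ 1 := by
    simpa using norm_fderiv_le_of_lipschitz ℝ lipschitzWith_one_norm (x₀ := ξ)
  calc ‖ξ‖ * ‖fderiv ℝ (rzSym j) ξ‖ = ‖‖ξ‖ • fderiv ℝ (rzSym j) ξ‖ := by
        rw [norm_smul, norm_norm]
    _ = ‖EuclideanSpace.proj j - rzSym j ξ • fderiv ℝ norm ξ‖ := by
        rw [hfd, add_sub_cancel_left]
    _ ≤ ‖(EuclideanSpace.proj j : Euc d →L[ℝ] ℝ)‖ + |rzSym j ξ| * ‖fderiv ℝ norm ξ‖ :=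
        (norm_sub_le _ _).trans_eq (by rw [norm_smul, Real.norm_eq_abs])
    _ ≤ 1 + 1 * 1 := by
        gcongr
        exact abs_rzSym_le_one j ξ
    _ = 2 := by norm_num

theorem isMikhlinSymbol_rzSym (j : Fin d) {r : ℝ} (hr : 0 < r) :
    IsMikhlinSymbol r 2 (rzSym j : Euc d → ℝ) where
  nonneg := zero_le_two
  contDiffAt _ hξ := contDiffAt_rzSym j hξ
  norm_le ξ _ := (abs_rzSym_le_one j ξ).trans one_le_two
  norm_mul_norm_fderiv_le _ hξ :=
    norm_mul_norm_fderiv_rzSym_le j (norm_pos_iff.1 (hr.trans_le hξ))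

theorem isMikhlinSymbol_rzSym_mul_sqrt_Ksym (hlam : 0 < lam) (j : Fin d) :
    IsMikhlinSymbol (lam / 4) (12 * jap lam ^ (-(1 : ℝ) / 2))
      fun ξ : Euc d => ((rzSym j ξ * √(Ksym ξ) : ℝ) : ℂ) := by
  have hr : 0 < lam / 4 := by positivity
  convert ((isMikhlinSymbol_rzSym j hr).mul hr (isMikhlinSymbol_sqrt_Ksym hlam)).ofReal hr using 1
  ring

end RieszSqrtK

section FixedTime

variable {d : ℕ} {χ : ℝ → ℝ}

theorem eLpNorm_mul_le_of_enorm_le {α : Type*} {_ : MeasurableSpace α} {μ : Measure α}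
    {a b : α → ℂ} {c p : ℝ≥0∞} (hb : AEStronglyMeasurable b μ) (ha : ∀ x, ‖a x‖ₑ ≤ c) :
    eLpNorm (fun x => a x * b x) p μ ≤ c * eLpNorm b p μ := by
  refine (eLpNorm_smul_le_eLpNorm_top_mul_eLpNorm p hb a).trans ?_
  gcongr
  rw [eLpNorm_exponent_top]
  exact eLpNormEssSup_le_of_ae_enorm_bound (.of_forall ha)

theorem exists_eLpNorm_mulOp_proj_mul_mulOp_proj_le (hχ : IsCutoff χ) {p : ℝ} (hp : d < p)
    (r : ℝ≥0∞) [ENNReal.HolderTriple (ENNReal.ofReal p) r 2] :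
    ∃ C : ℝ, 0 ≤ C ∧ ∀ (lam mu B B' : ℝ) (m m' : Euc d → ℂ), 0 < lam → 0 < mu →
      IsMikhlinSymbol (lam / 4) B m → IsMikhlinSymbol (mu / 4) B' m' → ∀ f g,
      eLpNorm (fun x => mulOp m (proj χ lam f) x * mulOp m' (proj χ mu g) x) 2 volume ≤
        ENNReal.ofReal (C * (B * B') * lam ^ ((d : ℝ) / 2 - d / p)) *
          (eLpNorm (proj χ lam f) r volume * eLpNorm (proj χ mu g) 2 volume) := by
  obtain ⟨C, hC0, hC⟩ := exists_enorm_mulOp_proj_le hχ hp r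
  refine ⟨C, hC0, fun lam mu B B' m m' hlam hmu hm hm' f g => ?_⟩
  have hB := hm.nonneg
  calc eLpNorm (fun x => mulOp m (proj χ lam f) x * mulOp m' (proj χ mu g) x) 2 volume
      ≤ ENNReal.ofReal (C * B * lam ^ ((d : ℝ) / 2 - d / p)) * eLpNorm (proj χ lam f) r volume *
          eLpNorm (mulOp m' (proj χ mu g)) 2 volume :=
        eLpNorm_mul_le_of_enorm_le (continuous_mulOp _ _).aestronglyMeasurable
          (hC lam B m hlam hm f)
    _ ≤ ENNReal.ofReal (C * B * lam ^ ((d : ℝ) / 2 - d / p)) * eLpNorm (proj χ lam f) r volume *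
          (ENNReal.ofReal B' * eLpNorm (proj χ mu g) 2 volume) := by
        gcongr
        exact eLpNorm_mulOp_proj_le hχ hmu (fun ξ hξ => hm'.norm_le ξ (by linarith)) g
    _ = _ := by
        rw [show C * (B * B') * lam ^ ((d : ℝ) / 2 - d / p)
          = C * B * lam ^ ((d : ℝ) / 2 - d / p) * B' by ring,
          ENNReal.ofReal_mul (p := C * B * lam ^ ((d : ℝ) / 2 - d / p)) (by positivity)]
        ring

/-- The bilinear expression `|D| K P_{λ₀} 𝓡 · (P_{λ₁} f 𝓡 √K P_{λ₂} g)`. -/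
def bilinearRz (χ : ℝ → ℝ) (lam₀ lam₁ lam₂ : ℝ) (f g : Euc d → ℂ) : Euc d → ℂ := fun x =>
  ∑ j : Fin d, mulOp (fun ξ => ((‖ξ‖ * Ksym ξ * rho χ (‖ξ‖ / lam₀) * rzSym j ξ : ℝ) : ℂ))
    (fun y => proj χ lam₁ f y *
      mulOp (fun ξ => ((rzSym j ξ * √(Ksym ξ) : ℝ) : ℂ)) (proj χ lam₂ g) y) x

theorem abs_norm_mul_Ksym_le_one (ξ : Euc d) : |‖ξ‖ * Ksym ξ| ≤ 1 := by
  rcases eq_or_ne ξ 0 with rfl | hξ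
  · simp
  · have hξ' := norm_pos_iff.2 hξ
    rw [Ksym, mul_div_cancel₀ _ hξ'.ne', abs_of_pos (tanh_pos_of_pos hξ')]
    exact (Real.tanh_lt_one _).le

theorem norm_outer_symbol_le_one (hχ : IsCutoff χ) (lam : ℝ) (j : Fin d) (ξ : Euc d) :
    ‖((‖ξ‖ * Ksym ξ * rho χ (‖ξ‖ / lam) * rzSym j ξ : ℝ) : ℂ)‖ ≤ 1 := by
  rw [Complex.norm_real, Real.norm_eq_abs, abs_mul, abs_mul]
  exact mul_le_one₀ (mul_le_one₀ (abs_norm_mul_Ksym_le_one ξ) (abs_nonneg _)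
    (hχ.abs_sub_le_one _ _)) (abs_nonneg _) (abs_rzSym_le_one j ξ)

theorem eLpNorm_bilinearRz_le (hχ : IsCutoff χ) (lam₀ : ℝ) {lam₁ lam₂ : ℝ} {f g : Euc d → ℂ}
    {B : ℝ≥0∞} (hB : ∀ j : Fin d, eLpNorm (fun y => proj χ lam₁ f y *
      mulOp (fun ξ => ((rzSym j ξ * √(Ksym ξ) : ℝ) : ℂ)) (proj χ lam₂ g) y) 2 volume ≤ B) :
    eLpNorm (bilinearRz χ lam₀ lam₁ lam₂ f g) 2 volume ≤ d * B := by
  have hsum : bilinearRz χ lam₀ lam₁ lam₂ f g = ∑ j : Fin d,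
      mulOp (fun ξ => ((‖ξ‖ * Ksym ξ * rho χ (‖ξ‖ / lam₀) * rzSym j ξ : ℝ) : ℂ))
        (fun y => proj χ lam₁ f y *
          mulOp (fun ξ => ((rzSym j ξ * √(Ksym ξ) : ℝ) : ℂ)) (proj χ lam₂ g) y) := by
    ext x
    simp only [bilinearRz, Finset.sum_apply]
  rw [hsum]
  refine (eLpNorm_sum_le (fun j _ => (continuous_mulOp _ _).aestronglyMeasurable)
    (by norm_num)).trans ((Finset.sum_le_sum (g := fun _ => B) fun j _ => ?_).trans_eq (by simp))
  refine (eLpNorm_mulOp_le (norm_outer_symbol_le_one hχ lam₀ j) _).trans ?_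
  rw [ENNReal.ofReal_one, one_mul]
  exact hB j

theorem exists_eLpNorm_bilinearRz_le (hχ : IsCutoff χ) {p : ℝ} (hp : d < p) (r : ℝ≥0∞)
    [ENNReal.HolderTriple (ENNReal.ofReal p) r 2] :
    ∃ C : ℝ, 0 ≤ C ∧ ∀ lam₀ lam₁ lam₂ : ℝ, 0 < lam₁ → 0 < lam₂ → ∀ f g : Euc d → ℂ,
      eLpNorm (bilinearRz χ lam₀ lam₁ lam₂ f g) 2 volume ≤
        ENNReal.ofReal (C * jap lam₂ ^ (-(1 : ℝ) / 2) * lam₁ ^ ((d : ℝ) / 2 - d / p)) *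
          (eLpNorm (proj χ lam₁ f) r volume * eLpNorm (proj χ lam₂ g) 2 volume) ∧
      eLpNorm (bilinearRz χ lam₀ lam₁ lam₂ f g) 2 volume ≤
        ENNReal.ofReal (C * jap lam₂ ^ (-(1 : ℝ) / 2) * lam₂ ^ ((d : ℝ) / 2 - d / p)) *
          (eLpNorm (proj χ lam₂ g) r volume * eLpNorm (proj χ lam₁ f) 2 volume) := by
  obtain ⟨C, hC0, hC⟩ := exists_eLpNorm_mulOp_proj_mul_mulOp_proj_le hχ hp r
  have hd : ∀ J a : ℝ, ∀ X : ℝ≥0∞, d * (ENNReal.ofReal (C * (12 * J) * a) * X) =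
      ENNReal.ofReal (d * (12 * C) * J * a) * X := fun J a X => by
    rw [← mul_assoc, ← ENNReal.ofReal_natCast, ← ENNReal.ofReal_mul (by positivity)]
    congr 2
    ring
  refine ⟨d * (12 * C), by positivity, fun lam₀ lam₁ lam₂ h₁ h₂ f g => ⟨?_, ?_⟩⟩
  · refine (eLpNorm_bilinearRz_le hχ lam₀ fun j => ?_).trans_eq (hd _ _ _)
    simpa only [one_mul, mulOp_one_proj hχ h₁] using hC lam₁ lam₂ _ _ _ _ h₁ h₂ (.one _)
      (isMikhlinSymbol_rzSym_mul_sqrt_Ksym h₂ j) f g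
  · refine (eLpNorm_bilinearRz_le hχ lam₀ fun j => ?_).trans_eq (hd _ _ _)
    simpa only [mul_one, mulOp_one_proj hχ h₁, mul_comm (proj χ lam₁ f _)] using
      hC lam₂ lam₁ _ _ _ _ h₂ h₁ (isMikhlinSymbol_rzSym_mul_sqrt_Ksym h₂ j) (.one _) g f

end FixedTime

section Time

theorem lintegral_mul_le_essSup_mul_lintegral {α : Type*} {_ : MeasurableSpace α} {μ : Measure α}
    {a : α → ℝ≥0∞} (ha : essSup a μ ≠ ⊤) (b : α → ℝ≥0∞) :
    ∫⁻ x, a x * b x ∂μ ≤ essSup a μ * ∫⁻ x, b x ∂μ := by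
  rw [← lintegral_const_mul' _ _ ha]
  refine lintegral_mono_ae ?_
  filter_upwards [ENNReal.ae_le_essSup a] with x hx
  gcongr

theorem lintegral_le_measure_univ_rpow_mul {α : Type*} {_ : MeasurableSpace α} {q : ℝ} (hq : 1 < q)
    (μ : Measure α) (f : α → ℝ≥0∞) :
    ∫⁻ x, f x ∂μ ≤ μ Set.univ ^ (1 - 1 / q) * (∫⁻ x, f x ^ q ∂μ) ^ (1 / q) := by
  obtain ⟨g, hgm, hgf, hg⟩ := exists_measurable_le_lintegral_eq μ f
  have hHolder := ENNReal.lintegral_mul_le_Lp_mul_Lq μ (Real.HolderConjugate.conjExponent hq)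
    hgm.aemeasurable (aemeasurable_const (b := (1 : ℝ≥0∞)))
  simp only [Pi.mul_apply, mul_one, ENNReal.one_rpow, lintegral_const, one_mul] at hHolder
  have hexp : 1 / q.conjExponent = 1 - 1 / q := by
    rw [Real.conjExponent]
    field_simp
  rw [hg, mul_comm, ← hexp]
  refine hHolder.trans ?_
  gcongr with x
  exact hgf x

variable {d : ℕ}

/-- The exponent `r = 2qd/(qd - 4)` of the space `X_λ`; meaningful for `4 < qd`. -/
abbrev spaceExponent (d : ℕ) (q : ℝ) : ℝ≥0∞ := ENNReal.ofReal (2 * q * d / (q * d - 4))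

theorem holderTriple_spaceExponent {q : ℝ} (hqd : 4 < q * d) :
    ENNReal.HolderTriple (ENNReal.ofReal (q * d / 2)) (spaceExponent d q) 2 := by
  have hp : 0 < q * d / 2 := by linarith
  have hr : 0 < 2 * q * d / (q * d - 4) := div_pos (by linarith) (by linarith)
  have : q * d - 4 ≠ 0 := by linarith
  have hqd0 : q * d ≠ 0 := by linarith
  have := left_ne_zero_of_mul hqd0
  have := right_ne_zero_of_mul hqd0
  constructor
  rw [← ENNReal.ofReal_inv_of_pos hp, ← ENNReal.ofReal_inv_of_pos hr,
    ← ENNReal.ofReal_add (by positivity) (by positivity),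
    show (2 : ℝ≥0∞) = ENNReal.ofReal 2 by simp, ← ENNReal.ofReal_inv_of_pos (by norm_num)]
  congr 1
  field_simp
  ring

theorem essSup_le_XlamNorm (χ : ℝ → ℝ) (T q lam : ℝ) (u : ℝ → Euc d → ℂ) :
    essSup (fun t => eLpNorm (proj χ lam (u t)) 2 volume)
      (volume.restrict (Set.Ioc (0 : ℝ) T)) ≤ XlamNorm χ T q lam u := by
  rw [XlamNorm]
  refine le_trans (le_of_eq ?_) (ENNReal.rpow_le_rpow le_self_add (by norm_num))
  rw [← ENNReal.rpow_natCast, ← ENNReal.rpow_mul]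
  norm_num

theorem lintegral_rpow_le_XlamNorm (χ : ℝ → ℝ) (T q lam : ℝ) (u : ℝ → Euc d → ℂ) :
    (∫⁻ t in Set.Ioc (0 : ℝ) T,
        eLpNorm (proj χ lam (u t)) (spaceExponent d q) volume ^ q) ^ (1 / q) ≤
      ENNReal.ofReal (jap lam ^ (3 / (2 * q))) * XlamNorm χ T q lam u := by
  have hj := jap_pos lam
  rw [XlamNorm]
  refine le_trans (le_of_eq ?_)
    (mul_le_mul_right (ENNReal.rpow_le_rpow le_add_self (by norm_num)) _)
  rw [ENNReal.mul_rpow_of_nonneg _ _ (by norm_num), ← ENNReal.rpow_natCast,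
    ← ENNReal.rpow_mul _ _ ((1 : ℝ) / 2), ENNReal.ofReal_rpow_of_pos (by positivity),
    ← mul_assoc, ← ENNReal.ofReal_mul (by positivity), ← Real.rpow_mul hj.le,
    ← Real.rpow_add hj, show 3 / (2 * q) + -3 / q * (1 / 2) = 0 by ring]
  norm_num

theorem lintegral_eLpNorm_proj_mul_eLpNorm_proj_le (χ : ℝ → ℝ) {T q : ℝ} (hT : 0 < T) (hq : 1 < q)
    (lam : ℝ) {mu : ℝ} (u : ℝ → Euc d → ℂ) {v : ℝ → Euc d → ℂ} (hv : XlamNorm χ T q mu v ≠ ⊤) :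
    ∫⁻ t in Set.Ioc (0 : ℝ) T, eLpNorm (proj χ lam (u t)) (spaceExponent d q) volume *
        eLpNorm (proj χ mu (v t)) 2 volume ≤
      ENNReal.ofReal (T ^ (1 - 1 / q) * jap lam ^ (3 / (2 * q))) *
        (XlamNorm χ T q lam u * XlamNorm χ T q mu v) := by
  have hv' := essSup_le_XlamNorm χ T q mu v
  simp_rw [mul_comm (eLpNorm (proj χ lam (u _)) _ _)]
  calc _ ≤ XlamNorm χ T q mu v * ∫⁻ t in Set.Ioc (0 : ℝ) T,
          eLpNorm (proj χ lam (u t)) (spaceExponent d q) volume :=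
        (lintegral_mul_le_essSup_mul_lintegral (ne_top_of_le_ne_top hv hv') _).trans (by gcongr)
    _ ≤ XlamNorm χ T q mu v * (ENNReal.ofReal (T ^ (1 - 1 / q)) *
          (ENNReal.ofReal (jap lam ^ (3 / (2 * q))) * XlamNorm χ T q lam u)) := by
        gcongr
        refine (lintegral_le_measure_univ_rpow_mul hq _ _).trans ?_
        rw [Measure.restrict_apply_univ, Real.volume_Ioc, sub_zero, ENNReal.ofReal_rpow_of_pos hT]
        gcongr
        exact lintegral_rpow_le_XlamNorm χ T q lam u
    _ = _ := by
        rw [ENNReal.ofReal_mul (by positivity)]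
        ring

theorem rpow_mul_jap_rpow_le {lam : ℝ} (hlam : 0 < lam) {a : ℝ} (ha : 0 ≤ a) (b : ℝ) :
    lam ^ a * jap lam ^ b ≤ jap lam ^ (a + b) := by
  rw [Real.rpow_add (jap_pos lam)]
  have := jap_pos lam
  gcongr
  exact le_jap lam

theorem lintegral_le_of_le_eLpNorm_proj_mul (χ : ℝ → ℝ) {T q : ℝ} (hT : 0 < T) (hq : 1 < q)
    (hqd : 4 < q * d) {lam mu C : ℝ} (hlam : 0 < lam) (hC : 0 ≤ C) {u v : ℝ → Euc d → ℂ}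
    (hv : XlamNorm χ T q mu v ≠ ⊤) {Φ : ℝ → ℝ≥0∞}
    (hΦ : ∀ t, Φ t ≤ ENNReal.ofReal (C * lam ^ ((d : ℝ) / 2 - d / (q * d / 2))) *
      (eLpNorm (proj χ lam (u t)) (spaceExponent d q) volume *
        eLpNorm (proj χ mu (v t)) 2 volume)) :
    ∫⁻ t in Set.Ioc (0 : ℝ) T, Φ t ≤
      ENNReal.ofReal (C * (T ^ (1 - 1 / q) * jap lam ^ ((d : ℝ) / 2 - 1 / (2 * q)))) *
        (XlamNorm χ T q lam u * XlamNorm χ T q mu v) := by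
  have hd : (d : ℝ) ≠ 0 := fun h => by norm_num [h] at hqd
  have hbernstein : (d : ℝ) / (q * d / 2) = 2 / q := by field_simp
  have hexp : 0 ≤ (d : ℝ) / 2 - d / (q * d / 2) := by
    rw [hbernstein, sub_nonneg, div_le_div_iff₀ (by linarith) two_pos]
    linarith
  have hpow := rpow_mul_jap_rpow_le hlam hexp (3 / (2 * q))
  rw [show (d : ℝ) / 2 - d / (q * d / 2) + 3 / (2 * q) = d / 2 - 1 / (2 * q) by
    rw [hbernstein]; field_simp; ring] at hpow
  refine (lintegral_mono hΦ).trans ?_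
  rw [lintegral_const_mul' _ _ ENNReal.ofReal_ne_top]
  refine (mul_le_mul_right
    (lintegral_eLpNorm_proj_mul_eLpNorm_proj_le χ hT hq lam u hv) _).trans ?_
  rw [← mul_assoc, ← ENNReal.ofReal_mul (by positivity), mul_assoc C, mul_left_comm (lam ^ _)]
  gcongr

end Time

theorem bilinear_dyadic_estimate_one_general (d : ℕ) (q : ℝ) (hq : 2 < q) (hqd : 4 < q * d)
    (χ : ℝ → ℝ) (hχ : IsCutoff χ) :
    ∃ C > 0, ∀ T : ℝ, 0 < T → ∀ lam₀ lam₁ lam₂ : ℝ, 0 < lam₁ → 0 < lam₂ →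
      ∀ u v : ℝ → Euc d → ℂ, XlamNorm χ T q lam₁ u ≠ ⊤ → XlamNorm χ T q lam₂ v ≠ ⊤ →
      ∫⁻ t in Set.Ioc (0 : ℝ) T, eLpNorm (bilinearRz χ lam₀ lam₁ lam₂ (u t) (v t)) 2 volume ≤
        ENNReal.ofReal (C * T ^ (1 - 1 / q) *
            min (jap lam₁) (jap lam₂) ^ ((d : ℝ) / 2 - 1 / (2 * q)) *
            jap lam₂ ^ (-(1 : ℝ) / 2)) *
          XlamNorm χ T q lam₁ u * XlamNorm χ T q lam₂ v := by
  have := holderTriple_spaceExponent hqd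
  have hd : (0 : ℝ) < d := by by_contra! h; nlinarith
  obtain ⟨C, hC, hfixed⟩ := exists_eLpNorm_bilinearRz_le (d := d) hχ (p := q * d / 2) (by nlinarith)
    (spaceExponent d q)
  refine ⟨C + 1, by positivity, fun T hT lam₀ lam₁ lam₂ h₁ h₂ u v hu hv => ?_⟩
  have hj := jap_pos lam₂
  have ht := fun t => hfixed lam₀ lam₁ lam₂ h₁ h₂ (u t) (v t)
  rw [mul_assoc _ (XlamNorm χ T q lam₁ u), mul_right_comm _ _ (jap lam₂ ^ _),
    mul_right_comm _ _ (jap lam₂ ^ _), mul_assoc]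
  rcases le_total (jap lam₁) (jap lam₂) with h | h
  · rw [min_eq_left h]
    have hj₁ := jap_pos lam₁
    refine (lintegral_le_of_le_eLpNorm_proj_mul χ hT (by linarith) hqd h₁ (by positivity) hv
      fun t => (ht t).1).trans ?_
    gcongr
    linarith
  · rw [min_eq_right h, mul_comm (XlamNorm χ T q lam₁ u)]
    refine (lintegral_le_of_le_eLpNorm_proj_mul χ hT (by linarith) hqd h₂ (by positivity) hu
      fun t => (ht t).2).trans ?_
    gcongr
    linarith

/-- Lemma 4, first bilinear dyadic estimate:
`‖|D| K P_{λ₀} 𝓡·(u_{λ₁} 𝓡√K v_{λ₂})‖_{L^1_T L^2_x}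
≲ T^{1-1/q} min(⟨λ₁⟩,⟨λ₂⟩)^{d/2-1/(2q)} ⟨λ₂⟩^{-1/2} ‖u‖_{X_{λ₁}} ‖v‖_{X_{λ₂}}`,
with implicit constant independent of `T` and the dyadic numbers `λᵢ = 2^{nᵢ}`. -/
theorem bilinear_dyadic_estimate_one
    (d : ℕ) (hd : 2 ≤ d) (q : ℝ) (hq : 2 < q) (χ : ℝ → ℝ) (hχ : IsCutoff χ) :
    ∃ C > 0, ∀ T : ℝ, 0 < T → ∀ n₀ n₁ n₂ : ℤ, ∀ u v : ℝ → Euc d → ℂ,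
      XlamNorm χ T q ((2 : ℝ) ^ n₁) u ≠ ⊤ → XlamNorm χ T q ((2 : ℝ) ^ n₂) v ≠ ⊤ →
      (∫⁻ t in Set.Ioc (0 : ℝ) T,
          eLpNorm (fun x => ∑ j : Fin d,
            mulOp (fun ξ =>
                ((‖ξ‖ * Ksym ξ * rho χ (‖ξ‖ / (2 : ℝ) ^ n₀) * rzSym j ξ : ℝ) : ℂ))
              (fun y => proj χ ((2 : ℝ) ^ n₁) (u t) y *
                mulOp (fun ξ => ((rzSym j ξ * Real.sqrt (Ksym ξ) : ℝ) : ℂ))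
                  (proj χ ((2 : ℝ) ^ n₂) (v t)) y) x) 2 volume) ≤
        ENNReal.ofReal (C * T ^ (1 - 1 / q) *
            min (jap ((2 : ℝ) ^ n₁)) (jap ((2 : ℝ) ^ n₂)) ^ ((d : ℝ) / 2 - 1 / (2 * q)) *
            jap ((2 : ℝ) ^ n₂) ^ (-(1 : ℝ) / 2)) *
          XlamNorm χ T q ((2 : ℝ) ^ n₁) u * XlamNorm χ T q ((2 : ℝ) ^ n₂) v := by
  have hd' : (2 : ℝ) ≤ d := by exact_mod_cast hd
  obtain ⟨C, hC, h⟩ := bilinear_dyadic_estimate_one_general d q hq (by nlinarith) χ hχ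
  exact ⟨C, hC, fun T hT n₀ n₁ n₂ => h T hT _ _ _ (by positivity) (by positivity)⟩
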